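/- Vertex-model computation of the Jones polynomial of the figure-eight knot 4₁ (the closure of the three-strand braid b₁b₂⁻¹b₁b₂⁻¹): with G₁ = R ⊗ I₂ and G₂ = I₂ ⊗ R (8×8 matrices over K, G₂ invertible) and H = h ⊗ h ⊗ h, one has ((1+q)²/q)·Tr(H·G₁·G₂⁻¹·G₁·G₂⁻¹) = q⁻² − q⁻¹ + 1 − q + q². -/

import Mathlib

open Matrix Kronecker

set_option synthInstance.maxHeartbeats 1000000
set_option maxHeartbeats 1000000

noncomputable section

/-- The ground field `K = ℚ(t)` of rational functions in one variable over `ℚ`. -/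
abbrev K : Type := RatFunc ℚ

/-- The variable `t`, a square root of `q`. -/
def t : K := RatFunc.X

/-- `q = t²`. -/
def q : K := t ^ 2

/-- Kronecker product of square matrices, flattened with the lexicographic
(row-major) index ordering: the pair `(i, j)` corresponds to position `i * n + j`. -/
def kron {m n : ℕ} (A : Matrix (Fin m) (Fin m) K) (B : Matrix (Fin n) (Fin n) K) :
    Matrix (Fin (m * n)) (Fin (m * n)) K :=
  Matrix.reindex finProdFinEquiv finProdFinEquiv (A ⊗ₖ B)

/-- The braided R-matrix of the two-state (six-vertex) model, with rows and columns
indexed by pairs `(i,j) ∈ {1,2}²` in the order `(1,1),(1,2),(2,1),(2,2)`;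
here `-t` represents `-q^{1/2}`. -/
def R : Matrix (Fin 4) (Fin 4) K :=
  !![1,  0,  0,     0;
     0,  0,  -t,    0;
     0, -t,  1 - q, 0;
     0,  0,  0,     1]

/-- The weight matrix `h = (1/(1+q))·diag(1, q)`. -/
def h : Matrix (Fin 2) (Fin 2) K := (1 + q)⁻¹ • !![1, 0; 0, q]

/-- `G₁ = R ⊗ I₂`. -/
def G₁ : Matrix (Fin 8) (Fin 8) K := kron R (1 : Matrix (Fin 2) (Fin 2) K)

/-- `G₂ = I₂ ⊗ R`. -/
def G₂ : Matrix (Fin 8) (Fin 8) K := kron (1 : Matrix (Fin 2) (Fin 2) K) R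

/-- `H = h ⊗ h ⊗ h`. -/
def H : Matrix (Fin 8) (Fin 8) K := kron (kron h h) h

/-!
Resolve the last positive crossing of `b₁b₂⁻¹b₁b₂⁻¹` by the Hecke skein relation
`b₁ = q b₁⁻¹ + (1 - q)`. By the braid relation the first term becomes `b₂⁻¹b₁⁻¹`, whose closure is
an unknot, and the second is `b₁b₂⁻²`, whose closure is a Hopf link. The weighted partial trace of
each of `R`, `R⁻¹`, `R⁻²` over the last strand is a scalar, so both closures are evaluated by
peeling off one strand at a time.
-/

section Braid

variable {G : Type*} [Group G]

theorem mul_inv_mul_inv_mul_inv_of_braid {a b : G} (braid : a * b * a = b * a * b) :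
    a * b⁻¹ * a⁻¹ * b⁻¹ = b⁻¹ * a⁻¹ := by
  have braid_inv : b⁻¹ * a⁻¹ * b⁻¹ = a⁻¹ * b⁻¹ * a⁻¹ := by
    simpa only [_root_.mul_inv_rev, ← mul_assoc] using congrArg (·⁻¹) braid.symm
  calc a * b⁻¹ * a⁻¹ * b⁻¹ = a * (b⁻¹ * a⁻¹ * b⁻¹) := by simp only [mul_assoc]
    _ = b⁻¹ * a⁻¹ := by rw [braid_inv]; group

theorem figure_eight_skein {F A : Type*} [CommRing F] [Ring A] [Algebra F A] {r : F} {a b : Aˣ}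
    (skein : (a : A) = r • (↑a⁻¹ : A) + (1 - r) • (1 : A)) (braid : a * b * a = b * a * b) :
    (a * ↑b⁻¹ * a * ↑b⁻¹ : A) =
      r • (↑b⁻¹ * ↑a⁻¹ : A) + (1 - r) • (a * (↑b⁻¹ * ↑b⁻¹) : A) := by
  have unknot : (a * ↑b⁻¹ * ↑a⁻¹ * ↑b⁻¹ : A) = ↑b⁻¹ * ↑a⁻¹ := by
    exact_mod_cast congrArg Units.val (mul_inv_mul_inv_mul_inv_of_braid braid)
  calc (a * ↑b⁻¹ * a * ↑b⁻¹ : A)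
      = a * ↑b⁻¹ * (r • (↑a⁻¹ : A) + (1 - r) • (1 : A)) * ↑b⁻¹ := by rw [← skein]
    _ = r • (a * ↑b⁻¹ * ↑a⁻¹ * ↑b⁻¹ : A) + (1 - r) • (a * (↑b⁻¹ * ↑b⁻¹) : A) := by
      simp only [mul_add, add_mul, mul_smul_comm, smul_mul_assoc, mul_one, mul_assoc]
    _ = _ := by rw [unknot]

end Braid

section Kron

variable {m n p : ℕ}

theorem kron_apply_finProdFinEquiv (A : Matrix (Fin m) (Fin m) K) (B : Matrix (Fin n) (Fin n) K)
    (i j : Fin m) (k l : Fin n) :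
    kron A B (finProdFinEquiv (i, k)) (finProdFinEquiv (j, l)) = A i j * B k l := by
  simp only [kron, reindex_apply, submatrix_apply, Equiv.symm_apply_apply, kroneckerMap_apply]

theorem sum_fin_mul {M : Type*} [AddCommMonoid M] (f : Fin (m * n) → M) :
    ∑ x, f x = ∑ i, ∑ k, f (finProdFinEquiv (i, k)) := by
  rw [← finProdFinEquiv.sum_comp, Fintype.sum_prod_type]

theorem kron_mul_kron (A C : Matrix (Fin m) (Fin m) K) (B D : Matrix (Fin n) (Fin n) K) :
    kron A B * kron C D = kron (A * C) (B * D) := by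
  simp only [kron, reindex_apply, submatrix_mul_equiv, mul_kronecker_mul]

theorem kron_one_one :
    kron (1 : Matrix (Fin m) (Fin m) K) (1 : Matrix (Fin n) (Fin n) K) = 1 := by
  simp only [kron, reindex_apply, one_kronecker_one, submatrix_one_equiv]

theorem inv_kron (A : Matrix (Fin m) (Fin m) K) (B : Matrix (Fin n) (Fin n) K) :
    (kron A B)⁻¹ = kron A⁻¹ B⁻¹ := by
  simp only [kron, inv_reindex, inv_kronecker]

theorem isUnit_kron {A : Matrix (Fin m) (Fin m) K} {B : Matrix (Fin n) (Fin n) K}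
    (hA : IsUnit A) (hB : IsUnit B) : IsUnit (kron A B) := by
  rw [isUnit_iff_isUnit_det] at hA hB
  refine IsUnit.of_mul_eq_one (kron A⁻¹ B⁻¹) ?_
  rw [kron_mul_kron, mul_nonsing_inv A hA, mul_nonsing_inv B hB, kron_one_one]

theorem add_kron (A B : Matrix (Fin m) (Fin m) K) (C : Matrix (Fin n) (Fin n) K) :
    kron (A + B) C = kron A C + kron B C := by
  simp only [kron, add_kronecker, reindex_apply, submatrix_add, Pi.add_apply]

theorem smul_kron (c : K) (A : Matrix (Fin m) (Fin m) K) (B : Matrix (Fin n) (Fin n) K) :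
    kron (c • A) B = c • kron A B := by
  simp only [kron, smul_kronecker, reindex_apply, submatrix_smul, Pi.smul_apply]

theorem kron_smul (c : K) (A : Matrix (Fin m) (Fin m) K) (B : Matrix (Fin n) (Fin n) K) :
    kron A (c • B) = c • kron A B := by
  simp only [kron, kronecker_smul, reindex_apply, submatrix_smul, Pi.smul_apply]

/-- The partial trace over the second tensor factor with weight `w`, that is
`A ↦ (id ⊗ tr) ((1 ⊗ w) A)`, in the flattened indexing of `kron`. With `w = h` it closes up the
last strand of a braid. -/
def partialTrace (w : Matrix (Fin n) (Fin n) K) :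
    Matrix (Fin (m * n)) (Fin (m * n)) K →ₗ[K] Matrix (Fin m) (Fin m) K where
  toFun A := of fun i j => ∑ k, ∑ l, w k l * A (finProdFinEquiv (i, l)) (finProdFinEquiv (j, k))
  map_add' A B := by
    ext i j
    simp only [of_apply, Matrix.add_apply, mul_add, Finset.sum_add_distrib]
  map_smul' c A := by
    ext i j
    simp only [of_apply, Matrix.smul_apply, smul_eq_mul, RingHom.id_apply, Finset.mul_sum,
      mul_left_comm]

theorem partialTrace_apply (w : Matrix (Fin n) (Fin n) K)
    (A : Matrix (Fin (m * n)) (Fin (m * n)) K) (i j : Fin m) :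
    partialTrace w A i j =
      ∑ k, ∑ l, w k l * A (finProdFinEquiv (i, l)) (finProdFinEquiv (j, k)) :=
  rfl

theorem trace_kron_mul (B : Matrix (Fin m) (Fin m) K) (w : Matrix (Fin n) (Fin n) K)
    (A : Matrix (Fin (m * n)) (Fin (m * n)) K) :
    trace (kron B w * A) = trace (B * partialTrace w A) := by
  simp only [trace, diag_apply, mul_apply, sum_fin_mul, kron_apply_finProdFinEquiv,
    partialTrace_apply, Finset.mul_sum, mul_assoc]
  exact Finset.sum_congr rfl fun i _ => Finset.sum_comm

theorem kron_one_mul_apply (B : Matrix (Fin m) (Fin m) K)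
    (A : Matrix (Fin (m * n)) (Fin (m * n)) K) (i : Fin m) (k : Fin n) (y : Fin (m * n)) :
    (kron B 1 * A : Matrix _ _ K) (finProdFinEquiv (i, k)) y =
      ∑ j, B i j * A (finProdFinEquiv (j, k)) y := by
  simp only [mul_apply, sum_fin_mul, kron_apply_finProdFinEquiv, one_apply, mul_ite, ite_mul,
    mul_one, mul_zero, zero_mul, Finset.sum_ite_eq, Finset.mem_univ, if_true]

theorem mul_kron_one_apply (A : Matrix (Fin (m * n)) (Fin (m * n)) K)
    (B : Matrix (Fin m) (Fin m) K) (x : Fin (m * n)) (j : Fin m) (k : Fin n) :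
    (A * kron B 1 : Matrix _ _ K) x (finProdFinEquiv (j, k)) =
      ∑ i, A x (finProdFinEquiv (i, k)) * B i j := by
  simp only [mul_apply, sum_fin_mul, kron_apply_finProdFinEquiv, one_apply, mul_ite,
    mul_one, mul_zero, Finset.sum_ite_eq', Finset.mem_univ, if_true]

theorem partialTrace_kron_one_mul (w : Matrix (Fin n) (Fin n) K) (B : Matrix (Fin m) (Fin m) K)
    (A : Matrix (Fin (m * n)) (Fin (m * n)) K) :
    partialTrace w (kron B 1 * A) = B * partialTrace w A := by
  ext i j
  simp only [partialTrace_apply, kron_one_mul_apply]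
  simp only [mul_apply, partialTrace_apply, Finset.mul_sum, mul_left_comm]
  rw [Finset.sum_comm (s := (Finset.univ : Finset (Fin m)))]
  exact Finset.sum_congr rfl fun k _ => Finset.sum_comm

theorem partialTrace_mul_kron_one (w : Matrix (Fin n) (Fin n) K)
    (A : Matrix (Fin (m * n)) (Fin (m * n)) K) (B : Matrix (Fin m) (Fin m) K) :
    partialTrace w (A * kron B 1) = partialTrace w A * B := by
  ext i j
  simp only [partialTrace_apply, mul_kron_one_apply]
  simp only [mul_apply, partialTrace_apply, Finset.mul_sum, Finset.sum_mul, mul_assoc]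
  rw [Finset.sum_comm (s := (Finset.univ : Finset (Fin m)))]
  exact Finset.sum_congr rfl fun k _ => Finset.sum_comm

theorem partialTrace_one (w : Matrix (Fin n) (Fin n) K) :
    partialTrace (m := m) w 1 = trace w • 1 := by
  ext i j
  simp [← kron_one_one, partialTrace_apply, kron_apply_finProdFinEquiv, one_apply, trace]

theorem cast_finProdFinEquiv_assoc (i : Fin m) (j : Fin n) (k : Fin p) :
    Fin.cast (mul_assoc m n p) (finProdFinEquiv (finProdFinEquiv (i, j), k)) =
      finProdFinEquiv (i, finProdFinEquiv (j, k)) := by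
  ext
  simp only [finProdFinEquiv_apply_val, Fin.val_cast]
  ring

-- On numerals `Fin.cast (mul_assoc m n p)` is definitionally the identity.
theorem partialTrace_kron (w : Matrix (Fin p) (Fin p) K) (A : Matrix (Fin m) (Fin m) K)
    (B : Matrix (Fin (n * p)) (Fin (n * p)) K) :
    partialTrace w ((kron A B).submatrix (Fin.cast (mul_assoc m n p)) (Fin.cast (mul_assoc m n p)))
      = kron A (partialTrace w B) := by
  ext x y
  obtain ⟨⟨i, k⟩, rfl⟩ := finProdFinEquiv.surjective x
  obtain ⟨⟨j, l⟩, rfl⟩ := finProdFinEquiv.surjective y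
  simp only [partialTrace_apply, submatrix_apply, cast_finProdFinEquiv_assoc,
    kron_apply_finProdFinEquiv, Finset.mul_sum, mul_left_comm]

end Kron

theorem q_ne_zero : q ≠ 0 := pow_ne_zero 2 RatFunc.X_ne_zero

theorem one_add_q_ne_zero : 1 + q ≠ 0 := by
  have hp : (1 + Polynomial.X ^ 2 : Polynomial ℚ) ≠ 0 := fun hp => by
    simpa using congrArg (Polynomial.eval 0) hp
  simpa [q, t] using (map_ne_zero_iff _ (RatFunc.algebraMap_injective ℚ)).mpr hp

theorem R_mul_R : R * R = q • (1 : Matrix (Fin 4) (Fin 4) K) + (1 - q) • R := by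
  ext i j
  fin_cases i <;> fin_cases j <;> simp [R, q, mul_apply, Fin.sum_univ_four] <;> ring

theorem R_mul_q_inv_smul_sub : R * q⁻¹ • (R - (1 - q) • (1 : Matrix (Fin 4) (Fin 4) K)) = 1 := by
  rw [mul_smul_comm, mul_sub, mul_smul_comm, mul_one, R_mul_R, add_sub_cancel_right,
    inv_smul_smul₀ q_ne_zero]

theorem isUnit_R : IsUnit R := .of_mul_eq_one _ R_mul_q_inv_smul_sub

theorem inv_R : R⁻¹ = q⁻¹ • (R - (1 - q) • (1 : Matrix (Fin 4) (Fin 4) K)) :=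
  inv_eq_right_inv R_mul_q_inv_smul_sub

theorem R_skein : R = q • R⁻¹ + (1 - q) • (1 : Matrix (Fin 4) (Fin 4) K) := by
  rw [inv_R, smul_inv_smul₀ q_ne_zero, sub_add_cancel]

theorem inv_R_mul_inv_R :
    R⁻¹ * R⁻¹ = q⁻¹ • ((1 : Matrix (Fin 4) (Fin 4) K) - (1 - q) • R⁻¹) := by
  have hR : R * R⁻¹ = 1 := mul_nonsing_inv R ((isUnit_iff_isUnit_det R).mp isUnit_R)
  nth_rw 1 [inv_R]
  rw [smul_mul_assoc, sub_mul, hR, smul_mul_assoc, one_mul]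

theorem isUnit_G₁ : IsUnit G₁ := isUnit_kron isUnit_R isUnit_one

theorem isUnit_G₂ : IsUnit G₂ := isUnit_kron isUnit_one isUnit_R

theorem inv_G₁ : G₁⁻¹ = kron (m := 4) (n := 2) R⁻¹ 1 := by
  rw [G₁, inv_kron, inv_one]

theorem inv_G₂ : G₂⁻¹ = kron (m := 2) (n := 4) 1 R⁻¹ := by
  rw [G₂, inv_kron, inv_one]

theorem G₁_skein : G₁ = q • G₁⁻¹ + (1 - q) • (1 : Matrix (Fin 8) (Fin 8) K) :=
  calc G₁ = kron (m := 4) (n := 2) (q • R⁻¹ + (1 - q) • 1) 1 := by rw [← R_skein, G₁]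
    _ = q • G₁⁻¹ + (1 - q) • 1 := by
      rw [add_kron, smul_kron, smul_kron, kron_one_one, inv_G₁]

theorem G₁_eq : G₁ = !![1, 0, 0, 0, 0, 0, 0, 0;
    0, 1, 0, 0, 0, 0, 0, 0;
    0, 0, 0, 0, -t, 0, 0, 0;
    0, 0, 0, 0, 0, -t, 0, 0;
    0, 0, -t, 0, 1 - q, 0, 0, 0;
    0, 0, 0, -t, 0, 1 - q, 0, 0;
    0, 0, 0, 0, 0, 0, 1, 0;
    0, 0, 0, 0, 0, 0, 0, 1] := by
  ext i j
  fin_cases i <;> fin_cases j <;>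
    simp [G₁, kron, R, finProdFinEquiv, Fin.divNat, Fin.modNat]

theorem G₂_eq : G₂ = !![1, 0, 0, 0, 0, 0, 0, 0;
    0, 0, -t, 0, 0, 0, 0, 0;
    0, -t, 1 - q, 0, 0, 0, 0, 0;
    0, 0, 0, 1, 0, 0, 0, 0;
    0, 0, 0, 0, 1, 0, 0, 0;
    0, 0, 0, 0, 0, 0, -t, 0;
    0, 0, 0, 0, 0, -t, 1 - q, 0;
    0, 0, 0, 0, 0, 0, 0, 1] := by
  ext i j
  fin_cases i <;> fin_cases j <;>
    simp [G₂, kron, R, finProdFinEquiv, Fin.divNat, Fin.modNat]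

theorem G₁_braid_G₂ : G₁ * G₂ * G₁ = G₂ * G₁ * G₂ := by
  have middle_entry : t * (1 - q) * t + (1 - q) * (1 - q) = 1 - q := by
    rw [q]
    ring
  rw [G₁_eq, G₂_eq]
  simp [middle_entry, mul_comm (1 - q) t]

theorem trace_h : trace h = 1 := by
  rw [h, trace_smul, trace_fin_two_of, smul_eq_mul, inv_mul_cancel₀ one_add_q_ne_zero]

theorem partialTrace_h_one :
    partialTrace (m := 2) h (1 : Matrix (Fin 4) (Fin 4) K) = (1 : K) • 1 :=
  (partialTrace_one h).trans (by rw [trace_h])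

theorem partialTrace_h_R :
    partialTrace (m := 2) h R = (1 + q)⁻¹ • (1 : Matrix (Fin 2) (Fin 2) K) := by
  ext i j
  rw [partialTrace_apply]
  fin_cases i <;> fin_cases j <;> simp [h, R, Fin.sum_univ_two, finProdFinEquiv]
  ring

theorem partialTrace_h_inv_R :
    partialTrace (m := 2) h R⁻¹ = (q / (1 + q)) • (1 : Matrix (Fin 2) (Fin 2) K) := by
  have hq := q_ne_zero
  have hq_add := one_add_q_ne_zero
  rw [inv_R, map_smul, map_sub, map_smul, partialTrace_h_R, partialTrace_h_one, smul_smul,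
    ← sub_smul, smul_smul]
  congr 1
  field_simp
  ring

theorem partialTrace_h_inv_R_mul_inv_R :
    partialTrace (m := 2) h (R⁻¹ * R⁻¹) =
      ((1 + q ^ 2) / (q * (1 + q))) • (1 : Matrix (Fin 2) (Fin 2) K) := by
  have hq := q_ne_zero
  have hq_add := one_add_q_ne_zero
  rw [inv_R_mul_inv_R, map_smul, map_sub, map_smul, partialTrace_h_one, partialTrace_h_inv_R,
    smul_smul, ← sub_smul, smul_smul]
  congr 1
  field_simp
  ring

theorem trace_kron_h_h_mul {Y : Matrix (Fin 4) (Fin 4) K} {c : K}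
    (hY : partialTrace (m := 2) h Y = c • (1 : Matrix (Fin 2) (Fin 2) K)) :
    trace (kron h h * Y) = c := by
  rw [trace_kron_mul, hY, mul_smul_comm, mul_one, trace_smul, trace_h, smul_eq_mul, mul_one]

theorem partialTrace_h_one_kron {Y : Matrix (Fin 4) (Fin 4) K} {c : K}
    (hY : partialTrace (m := 2) h Y = c • (1 : Matrix (Fin 2) (Fin 2) K)) :
    partialTrace (m := 4) h (kron (m := 2) (n := 4) 1 Y) = c • (1 : Matrix (Fin 4) (Fin 4) K) :=
  calc partialTrace (m := 4) h (kron (m := 2) (n := 4) 1 Y)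
      = kron (m := 2) (n := 2) 1 (partialTrace h Y) := partialTrace_kron (m := 2) (n := 2) h 1 Y
    _ = c • 1 := by rw [hY, kron_smul, kron_one_one]

theorem markov_trace (X Z : Matrix (Fin 4) (Fin 4) K) {Y : Matrix (Fin 4) (Fin 4) K} {c : K}
    (hY : partialTrace (m := 2) h Y = c • (1 : Matrix (Fin 2) (Fin 2) K)) :
    trace (H * (kron (m := 4) (n := 2) X 1 * kron (m := 2) (n := 4) 1 Y *
      kron (m := 4) (n := 2) Z 1)) = c * trace (kron h h * (X * Z)) := by
  rw [H, trace_kron_mul, partialTrace_mul_kron_one, partialTrace_kron_one_mul,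
    partialTrace_h_one_kron hY, mul_smul_comm, mul_one, smul_mul_assoc, mul_smul_comm, trace_smul,
    smul_eq_mul]

theorem G₁_G₂_skein :
    G₁ * G₂⁻¹ * G₁ * G₂⁻¹ = q • (G₂⁻¹ * G₁⁻¹) + (1 - q) • (G₁ * (G₂⁻¹ * G₂⁻¹)) := by
  obtain ⟨a, ha⟩ := isUnit_G₁
  obtain ⟨b, hb⟩ := isUnit_G₂
  have skein := G₁_skein
  have braid := G₁_braid_G₂
  rw [← ha] at skein braid
  rw [← hb] at braid
  rw [← ha, ← hb]
  simp only [← coe_units_inv] at skein ⊢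
  exact figure_eight_skein skein (Units.ext braid)

theorem trace_H_unknot : trace (H * (G₂⁻¹ * G₁⁻¹)) = q / (1 + q) * (q / (1 + q)) := by
  have markov := markov_trace 1 R⁻¹ partialTrace_h_inv_R
  rwa [kron_one_one, one_mul, one_mul, ← inv_G₁, ← inv_G₂,
    trace_kron_h_h_mul partialTrace_h_inv_R] at markov

theorem trace_H_hopf :
    trace (H * (G₁ * (G₂⁻¹ * G₂⁻¹))) = (1 + q ^ 2) / (q * (1 + q)) * (1 + q)⁻¹ := by
  have markov := markov_trace R 1 partialTrace_h_inv_R_mul_inv_R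
  rw [kron_one_one, mul_one, mul_one, trace_kron_h_h_mul partialTrace_h_R] at markov
  rwa [inv_G₂, kron_mul_kron, one_mul]

/-- vertex-model computation of the Jones polynomial of the
figure-eight knot `4₁` (the closure of the three-strand braid `b₁b₂⁻¹b₁b₂⁻¹`):
`G₂` is invertible and
`((1+q)²/q)·Tr(H·G₁·G₂⁻¹·G₁·G₂⁻¹) = q⁻² − q⁻¹ + 1 − q + q²`. -/
theorem figure_eight_jones_six_vertex :
    IsUnit G₂ ∧
    ((1 + q) ^ 2 / q) * Matrix.trace (H * G₁ * G₂⁻¹ * G₁ * G₂⁻¹) =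
      q ^ (-2 : ℤ) - q⁻¹ + 1 - q + q ^ 2 := by
  have hq := q_ne_zero
  have hq_add := one_add_q_ne_zero
  refine ⟨isUnit_G₂, ?_⟩
  calc (1 + q) ^ 2 / q * trace (H * G₁ * G₂⁻¹ * G₁ * G₂⁻¹)
      = (1 + q) ^ 2 / q * trace (H * (G₁ * G₂⁻¹ * G₁ * G₂⁻¹)) := by
        simp only [Matrix.mul_assoc]
    _ = (1 + q) ^ 2 / q * (q * trace (H * (G₂⁻¹ * G₁⁻¹)) +
          (1 - q) * trace (H * (G₁ * (G₂⁻¹ * G₂⁻¹)))) := by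
        rw [G₁_G₂_skein, mul_add, trace_add, mul_smul_comm, mul_smul_comm, trace_smul, trace_smul,
          smul_eq_mul, smul_eq_mul]
    _ = q ^ (-2 : ℤ) - q⁻¹ + 1 - q + q ^ 2 := by
        rw [trace_H_unknot, trace_H_hopf]
        field_simp
        ring
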